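/- Let Ω ⊆ ℝ² be open and let f : Ω → ℝ be a C^∞ function satisfying the zero mean curvature equation (1 − f_y²) f_xx + 2 f_x f_y f_xy + (1 − f_x²) f_yy = 0 on Ω. Set B := 1 − f_x² − f_y², and let p ∈ Ω be a non-degenerate point of type change, i.e. B(p) = 0 and ∇B(p) ≠ 0. Then there exist ε > 0 and a C^∞ curve σ = (x, y) : (−ε, ε) → Ω with σ(0) = p such that for all t: x'(t)² + y'(t)² = 1, f(σ(t)) = f(p) + t, B(σ(t)) = 0, (x'(t), y'(t)) = (f_x(σ(t)), f_y(σ(t))), and (x''(0), y''(0)) ≠ (0,0). Consequently t ↦ (f(p)+t, x(t), y(t)) is a null curve in ℝ³₁ lying in the graph of f whose acceleration at t = 0 is not proportional to its velocity (a non-degenerate null curve). -/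

import Mathlib

/-!
The curve `σ` is the integral curve of `∇f` through `p`. Differentiating `B = 1 - |∇f|²` gives
`∇B = -2 Hess f ∇f`, hence `⟨∇f, ∇B⟩ = -2 ⟨∇f, Hess f ∇f⟩`, while the zero mean curvature equation
reads `B Δf + ⟨∇f, Hess f ∇f⟩ = 0`. So `⟨∇f, ∇B⟩ = 2 Δf B`: along `σ`, the function `B` solves a
homogeneous linear differential equation and vanishes initially, so it vanishes identically. Thus
`|σ'|² = (f ∘ σ)' = |∇f|² = 1`, and `σ'' = Hess f ∇f = -½ ∇B` is nonzero at `p`. The velocity of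
`(f(p) + t, σ)` has time component `1` and its acceleration has time component `0`, so the two can
only be proportional where `σ'' = 0`.
-/

open Set

/-- Partial derivative in the first (x) direction. -/
noncomputable def pd1 {E : Type*} [NormedAddCommGroup E] [NormedSpace ℝ E]
    (f : ℝ × ℝ → E) (q : ℝ × ℝ) : E := fderiv ℝ f q (1, 0)

/-- Partial derivative in the second (y) direction. -/
noncomputable def pd2 {E : Type*} [NormedAddCommGroup E] [NormedSpace ℝ E]
    (f : ℝ × ℝ → E) (q : ℝ × ℝ) : E := fderiv ℝ f q (0, 1)

/-- B = 1 - f_x^2 - f_y^2. -/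
noncomputable def Bfun (f : ℝ × ℝ → ℝ) (q : ℝ × ℝ) : ℝ :=
  1 - (pd1 f q) ^ 2 - (pd2 f q) ^ 2

/-- The zero mean curvature equation at a point. -/
def ZMCAt (f : ℝ × ℝ → ℝ) (q : ℝ × ℝ) : Prop :=
  (1 - (pd2 f q) ^ 2) * pd1 (pd1 f) q
    + 2 * pd1 f q * pd2 f q * pd2 (pd1 f) q
    + (1 - (pd1 f q) ^ 2) * pd2 (pd2 f) q = 0

/-- The Lorentz inner product of ℝ³₁: ⟨(t,x,y),(t',x',y')⟩ = -tt' + xx' + yy'. -/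
def lprod (a b : ℝ × ℝ × ℝ) : ℝ :=
  -(a.1 * b.1) + a.2.1 * b.2.1 + a.2.2 * b.2.2

open Filter Function Topology

section PartialDerivatives

variable {E : Type*} [NormedAddCommGroup E] [NormedSpace ℝ E] {f : ℝ × ℝ → E} {q : ℝ × ℝ}
  {m n : WithTop ℕ∞}

lemma fderiv_apply_eq_smul_pd (f : ℝ × ℝ → E) (q v : ℝ × ℝ) :
    fderiv ℝ f q v = v.1 • pd1 f q + v.2 • pd2 f q := by
  have hv : v = v.1 • (1, 0) + v.2 • (0, 1) := by simp
  conv_lhs => rw [hv, map_add, map_smul, map_smul]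
  rfl

lemma contDiffAt_pd1 (hf : ContDiffAt ℝ n f q) (hmn : m + 1 ≤ n) : ContDiffAt ℝ m (pd1 f) q :=
  (hf.fderiv_right hmn).clm_apply contDiffAt_const

lemma contDiffAt_pd2 (hf : ContDiffAt ℝ n f q) (hmn : m + 1 ≤ n) : ContDiffAt ℝ m (pd2 f) q :=
  (hf.fderiv_right hmn).clm_apply contDiffAt_const

lemma differentiableAt_pd1 (hf : ContDiffAt ℝ 2 f q) : DifferentiableAt ℝ (pd1 f) q :=
  (contDiffAt_pd1 (m := 1) hf (by norm_num)).differentiableAt one_ne_zero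

lemma differentiableAt_pd2 (hf : ContDiffAt ℝ 2 f q) : DifferentiableAt ℝ (pd2 f) q :=
  (contDiffAt_pd2 (m := 1) hf (by norm_num)).differentiableAt one_ne_zero

lemma pd1_pd2_comm (hf : ContDiffAt ℝ 2 f q) : pd1 (pd2 f) q = pd2 (pd1 f) q := by
  have hd : DifferentiableAt ℝ (fderiv ℝ f) q :=
    (hf.fderiv_right (m := 1) (by norm_num)).differentiableAt one_ne_zero
  have second_fderiv (v w : ℝ × ℝ) :
      fderiv ℝ (fun z ↦ fderiv ℝ f z v) q w = fderiv ℝ (fderiv ℝ f) q w v := by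
    simp [fderiv_clm_apply hd (differentiableAt_const v)]
  calc pd1 (pd2 f) q = fderiv ℝ (fderiv ℝ f) q (1, 0) (0, 1) := second_fderiv _ _
    _ = fderiv ℝ (fderiv ℝ f) q (0, 1) (1, 0) := hf.isSymmSndFDerivAt (by simp) _ _
    _ = pd2 (pd1 f) q := (second_fderiv _ _).symm

end PartialDerivatives

/-- The Euclidean gradient of a function on the plane. It is built from `pd1` and `pd2` because
`ℝ × ℝ` carries the sup norm, so that Mathlib's `gradient` is not available on it. -/
noncomputable def planeGradient (f : ℝ × ℝ → ℝ) (q : ℝ × ℝ) : ℝ × ℝ := (pd1 f q, pd2 f q)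

/-- The Euclidean Laplacian of a function on the plane, the coefficient in the linear equation
satisfied by `Bfun f` along the gradient curves of `f`. -/
noncomputable def planeLaplacian (f : ℝ × ℝ → ℝ) (q : ℝ × ℝ) : ℝ :=
  pd1 (pd1 f) q + pd2 (pd2 f) q

section Gradient

variable {f : ℝ × ℝ → ℝ} {q : ℝ × ℝ} {m n : WithTop ℕ∞}

lemma contDiffAt_planeGradient (hf : ContDiffAt ℝ n f q) (hmn : m + 1 ≤ n) :
    ContDiffAt ℝ m (planeGradient f) q :=
  (contDiffAt_pd1 hf hmn).prodMk (contDiffAt_pd2 hf hmn)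

lemma contDiffAt_Bfun (hf : ContDiffAt ℝ n f q) (hmn : m + 1 ≤ n) : ContDiffAt ℝ m (Bfun f) q :=
  (contDiffAt_const.sub ((contDiffAt_pd1 hf hmn).pow 2)).sub ((contDiffAt_pd2 hf hmn).pow 2)

lemma continuousAt_planeLaplacian (hf : ContDiffAt ℝ 2 f q) :
    ContinuousAt (planeLaplacian f) q :=
  have hxx : ContDiffAt ℝ 0 (pd1 (pd1 f)) q :=
    contDiffAt_pd1 (contDiffAt_pd1 (m := 1) hf (by norm_num)) (by norm_num)
  have hyy : ContDiffAt ℝ 0 (pd2 (pd2 f)) q :=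
    contDiffAt_pd2 (contDiffAt_pd2 (m := 1) hf (by norm_num)) (by norm_num)
  hxx.continuousAt.add hyy.continuousAt

lemma Bfun_eq_zero_iff : Bfun f q = 0 ↔ (pd1 f q) ^ 2 + (pd2 f q) ^ 2 = 1 := by
  rw [Bfun, sub_sub, sub_eq_zero, eq_comm]

lemma fderiv_planeGradient_self (f : ℝ × ℝ → ℝ) (q : ℝ × ℝ) :
    fderiv ℝ f q (planeGradient f q) = 1 - Bfun f q := by
  simp only [fderiv_apply_eq_smul_pd, planeGradient, Bfun, smul_eq_mul]
  ring

lemma fderiv_Bfun_apply (hf : ContDiffAt ℝ 2 f q) (v : ℝ × ℝ) :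
    fderiv ℝ (Bfun f) q v =
      -2 * (pd1 f q * fderiv ℝ (pd1 f) q v + pd2 f q * fderiv ℝ (pd2 f) q v) := by
  have hB : HasFDerivAt (Bfun f) _ q :=
    (((differentiableAt_pd1 hf).hasFDerivAt.pow 2).const_sub 1).sub
      ((differentiableAt_pd2 hf).hasFDerivAt.pow 2)
  rw [hB.fderiv]
  simp only [Nat.add_one_sub_one, pow_one, nsmul_eq_mul, Nat.cast_ofNat, sub_apply, neg_apply,
    smul_apply, smul_eq_mul]
  ring

/-- The symmetry of the Hessian turns the gradient of `|∇f|²` into a derivative of `∇f`. -/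
lemma fderiv_planeGradient_planeGradient (hf : ContDiffAt ℝ 2 f q) :
    fderiv ℝ (planeGradient f) q (planeGradient f q) =
      (-1 / 2 : ℝ) • planeGradient (Bfun f) q := by
  have hBx : pd1 (Bfun f) q = -2 * (pd1 f q * pd1 (pd1 f) q + pd2 f q * pd1 (pd2 f) q) :=
    fderiv_Bfun_apply hf _
  have hBy : pd2 (Bfun f) q = -2 * (pd1 f q * pd2 (pd1 f) q + pd2 f q * pd2 (pd2 f) q) :=
    fderiv_Bfun_apply hf _
  have hprod : fderiv ℝ (planeGradient f) q = (fderiv ℝ (pd1 f) q).prod (fderiv ℝ (pd2 f) q) :=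
    (differentiableAt_pd1 hf).fderiv_prodMk (differentiableAt_pd2 hf)
  rw [hprod, ContinuousLinearMap.prod_apply, fderiv_apply_eq_smul_pd, fderiv_apply_eq_smul_pd]
  simp only [planeGradient, hBx, hBy, pd1_pd2_comm hf, smul_eq_mul, Prod.smul_mk, Prod.mk.injEq]
  constructor <;> ring

lemma fderiv_Bfun_planeGradient (hf : ContDiffAt ℝ 2 f q) (hz : ZMCAt f q) :
    fderiv ℝ (Bfun f) q (planeGradient f q) = 2 * planeLaplacian f q * Bfun f q := by
  rw [fderiv_Bfun_apply hf, fderiv_apply_eq_smul_pd, fderiv_apply_eq_smul_pd]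
  simp only [planeGradient, planeLaplacian, pd1_pd2_comm hf, smul_eq_mul, Bfun]
  unfold ZMCAt at hz
  linear_combination -2 * hz

end Gradient

section IntegralCurves

variable {E : Type*} [NormedAddCommGroup E] [NormedSpace ℝ E]

lemma eventually_eq_zero_of_isIntegralCurveAt_clm {A : ℝ → E →L[ℝ] E} {g : ℝ → E} {t₀ : ℝ}
    (hA : ContinuousAt A t₀) (hg : IsIntegralCurveAt g (fun t z ↦ A t z) t₀) (h0 : g t₀ = 0) :
    ∀ᶠ t in 𝓝 t₀, g t = 0 := by
  have hbound : ∀ᶠ t in 𝓝 t₀, ‖A t‖₊ < ‖A t₀‖₊ + 1 :=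
    hA.nnnorm.eventually_lt_const (lt_add_one _)
  have hzero : IsIntegralCurveAt (fun _ ↦ (0 : E)) (fun t z ↦ A t z) t₀ :=
    Eventually.of_forall fun t ↦ by simpa using hasDerivAt_const t (0 : E)
  exact ODE_solution_unique_of_eventually (s := fun _ ↦ univ)
    (hbound.mono fun t ht ↦ ((A t).lipschitz.weaken ht.le).lipschitzOnWith)
    (hg.mono fun t ht ↦ ⟨ht, mem_univ _⟩) (hzero.mono fun t ht ↦ ⟨ht, mem_univ _⟩) h0

lemma contDiffOn_succ_of_isIntegralCurveOn [CompleteSpace E] {v : ℝ → E → E} {σ : ℝ → E}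
    {I : Set ℝ} {u : Set E} {n : ℕ∞} (hI : IsOpen I) (hv : ContDiffOn ℝ n (uncurry v) (I ×ˢ u))
    (hmem : MapsTo σ I u) (hσ : IsIntegralCurveOn σ v I) : ContDiffOn ℝ (n + 1) σ I := by
  have hσn : ContDiffOn ℝ n σ I := fun t ht ↦ by
    obtain ⟨a, b, -, hab, habI⟩ := exists_Icc_mem_subset_of_mem_nhds (hI.mem_nhds ht)
    have hσab : ContDiffOn ℝ n σ (Icc a b) :=
      ODE.contDiffOn_enat_Icc_of_hasDerivWithinAt (hv.mono (prod_mono_left habI))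
        (hσ.mono habI) (hmem.mono_left habI)
    exact (hσab.contDiffAt hab).contDiffWithinAt
  have hderiv (t : ℝ) (ht : t ∈ I) : HasDerivAt σ (v t (σ t)) t :=
    (hσ t ht).hasDerivAt (hI.mem_nhds ht)
  rw [contDiffOn_succ_iff_deriv_of_isOpen hI]
  exact ⟨fun t ht ↦ (hderiv t ht).differentiableAt.differentiableWithinAt, by simp,
    (ODE.contDiffOn_comp hv hσn hmem).congr fun t ht ↦ (hderiv t ht).deriv⟩

end IntegralCurves

section GradientCurves

variable {f : ℝ × ℝ → ℝ} {σ : ℝ → ℝ × ℝ} {t₀ : ℝ}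

lemma deriv_deriv_eq_neg_half_smul_planeGradient_Bfun (hf : ContDiffAt ℝ 2 f (σ t₀))
    (hσ : IsIntegralCurveAt σ (fun _ ↦ planeGradient f) t₀) :
    deriv (deriv σ) t₀ = (-1 / 2 : ℝ) • planeGradient (Bfun f) (σ t₀) := by
  have hgrad : DifferentiableAt ℝ (planeGradient f) (σ t₀) :=
    (contDiffAt_planeGradient (m := 1) hf (by norm_num)).differentiableAt one_ne_zero
  have hvel : deriv σ =ᶠ[𝓝 t₀] planeGradient f ∘ σ := hσ.mono fun t ht ↦ ht.deriv
  rw [hvel.deriv_eq, (hgrad.hasFDerivAt.comp_hasDerivAt t₀ hσ.hasDerivAt).deriv,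
    fderiv_planeGradient_planeGradient hf]

lemma contDiffOn_of_isIntegralCurveOn_planeGradient {I : Set ℝ} {n : ℕ∞} (hn : 1 ≤ n)
    (hI : IsOpen I) (hf : ∀ t ∈ I, ContDiffAt ℝ n f (σ t))
    (hσ : IsIntegralCurveOn σ (fun _ ↦ planeGradient f) I) : ContDiffOn ℝ n σ I := by
  obtain ⟨m, rfl⟩ : ∃ m, n = m + 1 := ⟨n - 1, (tsub_add_cancel_of_le hn).symm⟩
  have hgrad : ContDiffOn ℝ m (planeGradient f) {q | ContDiffAt ℝ (m + 1 : ℕ∞) f q} :=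
    fun q (hq : ContDiffAt ℝ (m + 1 : ℕ∞) f q) ↦
      (contDiffAt_planeGradient hq le_rfl).contDiffWithinAt
  have hfield : ContDiffOn ℝ m (uncurry fun _ : ℝ ↦ planeGradient f)
      (I ×ˢ {q | ContDiffAt ℝ (m + 1 : ℕ∞) f q}) :=
    hgrad.comp contDiffOn_snd fun z hz ↦ hz.2
  exact contDiffOn_succ_of_isIntegralCurveOn hI hfield hf hσ

lemma eventually_Bfun_eq_zero (hf : ContDiffAt ℝ 2 f (σ t₀))
    (hz : ∀ᶠ q in 𝓝 (σ t₀), ZMCAt f q)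
    (hσ : IsIntegralCurveAt σ (fun _ ↦ planeGradient f) t₀) (hB : Bfun f (σ t₀) = 0) :
    ∀ᶠ t in 𝓝 t₀, Bfun f (σ t) = 0 := by
  have hcoeff : ContinuousAt (fun t ↦ 2 * planeLaplacian f (σ t)) t₀ :=
    continuousAt_const.mul ((continuousAt_planeLaplacian hf).comp hσ.continuousAt)
  refine eventually_eq_zero_of_isIntegralCurveAt_clm
    (A := fun t ↦ ContinuousLinearMap.mul ℝ ℝ (2 * planeLaplacian f (σ t)))
    ((ContinuousLinearMap.mul ℝ ℝ).continuous.continuousAt.comp hcoeff) ?_ hB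
  filter_upwards [hσ, hσ.continuousAt.eventually hz,
    hσ.continuousAt.eventually (hf.eventually (by simp))] with t hσt hzt hft
  have hBt : DifferentiableAt ℝ (Bfun f) (σ t) :=
    (contDiffAt_Bfun (m := 1) hft (by norm_num)).differentiableAt one_ne_zero
  simpa [comp_def, fderiv_Bfun_planeGradient hft hzt] using hBt.hasFDerivAt.comp_hasDerivAt t hσt

lemma eqOn_comp_add_sub_of_Bfun_eq_zero {I : Set ℝ} (hI : IsOpen I) (hIc : IsPreconnected I)
    (ht₀ : t₀ ∈ I) (hf : ∀ t ∈ I, DifferentiableAt ℝ f (σ t))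
    (hσ : IsIntegralCurveOn σ (fun _ ↦ planeGradient f) I) (hB : ∀ t ∈ I, Bfun f (σ t) = 0) :
    EqOn (f ∘ σ) (fun t ↦ f (σ t₀) + (t - t₀)) I := by
  have hfσ (t : ℝ) (ht : t ∈ I) : HasDerivAt (f ∘ σ) 1 t := by
    simpa [fderiv_planeGradient_self, hB t ht] using
      (hf t ht).hasFDerivAt.comp_hasDerivAt t ((hσ t ht).hasDerivAt (hI.mem_nhds ht))
  have haff (s : ℝ) : HasDerivAt (fun t ↦ f (σ t₀) + (t - t₀)) 1 s :=
    ((hasDerivAt_id s).sub_const t₀).const_add _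
  exact hI.eqOn_of_deriv_eq hIc
    (fun t ht ↦ (hfσ t ht).differentiableAt.differentiableWithinAt)
    (fun t _ ↦ (haff t).differentiableAt.differentiableWithinAt)
    (fun t ht ↦ (hfσ t ht).deriv.trans (haff t).deriv.symm) ht₀ (by simp)

lemma exists_isIntegralCurveOn_planeGradient_Bfun_eq_zero {Ω : Set (ℝ × ℝ)} {p : ℝ × ℝ}
    (hΩ : Ω ∈ 𝓝 p) (hf : ContDiffAt ℝ 2 f p) (hz : ∀ᶠ q in 𝓝 p, ZMCAt f q)
    (hB : Bfun f p = 0) :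
    ∃ ε > 0, ∃ σ : ℝ → ℝ × ℝ, σ 0 = p ∧ MapsTo σ (Ioo (-ε) ε) Ω ∧
      IsIntegralCurveOn σ (fun _ ↦ planeGradient f) (Ioo (-ε) ε) ∧
      ∀ t ∈ Ioo (-ε) ε, Bfun f (σ t) = 0 := by
  obtain ⟨σ, rfl, δ, hδ, hσδ⟩ := (contDiffAt_planeGradient (m := 1) hf (by norm_num)
    ).exists_forall_mem_closedBall_exists_eq_forall_mem_Ioo_hasDerivAt₀ 0
  have hσ : IsIntegralCurveAt σ (fun _ ↦ planeGradient f) 0 := by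
    filter_upwards [Ioo_mem_nhds (sub_lt_self 0 hδ) (lt_add_of_pos_right 0 hδ)] using hσδ
  obtain ⟨ε, hε, hall⟩ := Metric.eventually_nhds_iff_ball.1
    ((hσ.continuousAt.eventually_mem hΩ).and (hσ.and (eventually_Bfun_eq_zero hf hz hσ hB)))
  simp only [Real.ball_eq_Ioo, zero_sub, zero_add] at hall
  exact ⟨ε, hε, σ, rfl, fun t ht ↦ (hall t ht).1, fun t ht ↦ (hall t ht).2.1.hasDerivWithinAt,
    fun t ht ↦ (hall t ht).2.2⟩

end GradientCurves

section NullCurves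

variable {E F : Type*} [NormedAddCommGroup E] [NormedSpace ℝ E] [NormedAddCommGroup F]
  [NormedSpace ℝ F]

lemma deriv_deriv_prodMk {σ : ℝ → E} {τ : ℝ → F} {t : ℝ} (hσ : ContDiffAt ℝ 2 σ t)
    (hτ : ContDiffAt ℝ 2 τ t) :
    deriv (deriv fun s ↦ (σ s, τ s)) t = (deriv (deriv σ) t, deriv (deriv τ) t) := by
  have hvel : (deriv fun s ↦ (σ s, τ s)) =ᶠ[𝓝 t] fun s ↦ (deriv σ s, deriv τ s) := by
    filter_upwards [hσ.eventually (by simp), hτ.eventually (by simp)] with s hσs hτs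
    exact ((hσs.differentiableAt two_ne_zero).hasDerivAt.prodMk
      (hτs.differentiableAt two_ne_zero).hasDerivAt).deriv
  have hσ' : DifferentiableAt ℝ (deriv σ) t :=
    (hσ.derivWithin (m := 1) (by norm_num)).differentiableAt one_ne_zero
  have hτ' : DifferentiableAt ℝ (deriv τ) t :=
    (hτ.derivWithin (m := 1) (by norm_num)).differentiableAt one_ne_zero
  rw [hvel.deriv_eq, (hσ'.hasDerivAt.prodMk hτ'.hasDerivAt).deriv]

lemma hasDerivAt_const_add_prodMk {σ : ℝ → E} {v : E} {t : ℝ} (c : ℝ) (hσ : HasDerivAt σ v t) :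
    HasDerivAt (fun s ↦ (c + s, σ s)) ((1 : ℝ), v) t :=
  ((hasDerivAt_id t).const_add c).prodMk hσ

lemma lprod_one_self (v : ℝ × ℝ) : lprod (1, v) (1, v) = v.1 ^ 2 + v.2 ^ 2 - 1 := by
  simp only [lprod]
  ring

lemma not_exists_deriv_deriv_eq_smul_deriv {σ : ℝ → E} {t : ℝ} (c : ℝ) (hσ : ContDiffAt ℝ 2 σ t)
    (hacc : deriv (deriv σ) t ≠ 0) :
    ¬ ∃ k : ℝ, deriv (deriv fun s ↦ (c + s, σ s)) t = k • deriv (fun s ↦ (c + s, σ s)) t := by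
  have hvel : deriv (fun s ↦ (c + s, σ s)) t = ((1 : ℝ), deriv σ t) :=
    (hasDerivAt_const_add_prodMk c (hσ.differentiableAt two_ne_zero).hasDerivAt).deriv
  have hlin : ContDiffAt ℝ 2 (fun s : ℝ ↦ c + s) t := contDiffAt_const.add contDiffAt_id
  have htime : deriv (deriv fun s : ℝ ↦ c + s) t = 0 := by simp
  rintro ⟨k, hk⟩
  rw [deriv_deriv_prodMk hlin hσ, hvel, htime, Prod.smul_mk,
    smul_eq_mul, mul_one, Prod.mk.injEq] at hk
  obtain ⟨rfl, hk⟩ := hk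
  exact hacc (by rw [hk, zero_smul])

end NullCurves

theorem stmt2_general {n : ℕ∞} (hn : 2 ≤ n) {Ω : Set (ℝ × ℝ)} (hΩ : IsOpen Ω)
    {f : ℝ × ℝ → ℝ}
    (hf : ContDiffOn ℝ n f Ω)
    (hzmc : ∀ q ∈ Ω, ZMCAt f q)
    {p : ℝ × ℝ} (hp : p ∈ Ω)
    (hB : Bfun f p = 0)
    (hgrad : (pd1 (Bfun f) p, pd2 (Bfun f) p) ≠ (0, 0)) :
    ∃ ε > 0, ∃ x y : ℝ → ℝ,
      ContDiffOn ℝ n x (Ioo (-ε) ε) ∧ ContDiffOn ℝ n y (Ioo (-ε) ε) ∧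
      (x 0, y 0) = p ∧
      (∀ t ∈ Ioo (-ε) ε,
        (x t, y t) ∈ Ω ∧
        (deriv x t) ^ 2 + (deriv y t) ^ 2 = 1 ∧
        f (x t, y t) = f p + t ∧
        Bfun f (x t, y t) = 0 ∧
        deriv x t = pd1 f (x t, y t) ∧
        deriv y t = pd2 f (x t, y t)) ∧
      (deriv (deriv x) 0, deriv (deriv y) 0) ≠ (0, 0) ∧
      (∀ t ∈ Ioo (-ε) ε,
        lprod (deriv (fun s => (f p + s, x s, y s)) t)
              (deriv (fun s => (f p + s, x s, y s)) t) = 0 ∧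
        deriv (fun s => (f p + s, x s, y s)) t ≠ 0) ∧
      ¬ ∃ c : ℝ, deriv (deriv (fun s => (f p + s, x s, y s))) 0
          = c • deriv (fun s => (f p + s, x s, y s)) 0 := by
  have hfΩ (q : ℝ × ℝ) (hq : q ∈ Ω) : ContDiffAt ℝ n f q := hf.contDiffAt (hΩ.mem_nhds hq)
  have hn' : (2 : WithTop ℕ∞) ≤ n := WithTop.coe_le_coe.2 hn
  obtain ⟨ε, hε, σ, rfl, hσΩ, hσ, hBσ⟩ := exists_isIntegralCurveOn_planeGradient_Bfun_eq_zero
    (hΩ.mem_nhds hp) ((hfΩ p hp).of_le hn') (eventually_of_mem (hΩ.mem_nhds hp) hzmc) hB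
  have h0 : (0 : ℝ) ∈ Ioo (-ε) ε := ⟨neg_lt_zero.2 hε, hε⟩
  have hvel (t : ℝ) (ht : t ∈ Ioo (-ε) ε) : HasDerivAt σ (planeGradient f (σ t)) t :=
    (hσ t ht).hasDerivAt (isOpen_Ioo.mem_nhds ht)
  have hσn : ContDiffOn ℝ n σ (Ioo (-ε) ε) :=
    contDiffOn_of_isIntegralCurveOn_planeGradient (one_le_two.trans hn) isOpen_Ioo
      (fun t ht ↦ hfΩ _ (hσΩ ht)) hσ
  have hσ2 : ContDiffAt ℝ 2 σ 0 := (hσn.contDiffAt (isOpen_Ioo.mem_nhds h0)).of_le hn'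
  have hacc : deriv (deriv σ) 0 ≠ 0 := by
    rw [deriv_deriv_eq_neg_half_smul_planeGradient_Bfun ((hfΩ _ hp).of_le hn')
      (hσ.isIntegralCurveAt (isOpen_Ioo.mem_nhds h0))]
    exact smul_ne_zero (by norm_num) hgrad
  have hfσ : EqOn (f ∘ σ) (fun t ↦ f (σ 0) + (t - 0)) (Ioo (-ε) ε) :=
    eqOn_comp_add_sub_of_Bfun_eq_zero isOpen_Ioo isPreconnected_Ioo h0
      (fun t ht ↦ ((hfΩ _ (hσΩ ht)).of_le hn').differentiableAt two_ne_zero) hσ hBσ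
  refine ⟨ε, hε, fun t ↦ (σ t).1, fun t ↦ (σ t).2, hσn.fst, hσn.snd, rfl, fun t ht ↦ ?_, ?_,
    fun t ht ↦ ?_, not_exists_deriv_deriv_eq_smul_deriv _ hσ2 hacc⟩
  · rw [HasDerivAt.deriv (hvel t ht).fst, HasDerivAt.deriv (hvel t ht).snd]
    exact ⟨hσΩ ht, Bfun_eq_zero_iff.1 (hBσ t ht), by simpa using hfσ ht, hBσ t ht, rfl, rfl⟩
  · rwa [← deriv_deriv_prodMk hσ2.fst hσ2.snd]
  · rw [(hasDerivAt_const_add_prodMk _ (hvel t ht)).deriv, lprod_one_self]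
    exact ⟨sub_eq_zero.2 (Bfun_eq_zero_iff.1 (hBσ t ht)), fun h ↦ one_ne_zero (congrArg Prod.fst h)⟩

/-- through any non-degenerate point of type change of a smooth solution of
    the ZMC equation there passes a smooth unit-speed curve σ = (x,y) with σ(0) = p,
    f(σ(t)) = f(p) + t, B(σ(t)) = 0, σ' = ∇f ∘ σ and σ''(0) ≠ 0; consequently
    t ↦ (f(p)+t, x(t), y(t)) is a non-degenerate null curve in the graph of f. -/
theorem stmt2 (Ω : Set (ℝ × ℝ)) (hΩ : IsOpen Ω) (f : ℝ × ℝ → ℝ)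
    (hf : ContDiffOn ℝ (⊤ : ℕ∞) f Ω)
    (hzmc : ∀ q ∈ Ω, ZMCAt f q)
    (p : ℝ × ℝ) (hp : p ∈ Ω)
    (hB : Bfun f p = 0)
    (hgrad : (pd1 (Bfun f) p, pd2 (Bfun f) p) ≠ (0, 0)) :
    ∃ ε > 0, ∃ x y : ℝ → ℝ,
      ContDiffOn ℝ (⊤ : ℕ∞) x (Ioo (-ε) ε) ∧ ContDiffOn ℝ (⊤ : ℕ∞) y (Ioo (-ε) ε) ∧
      (x 0, y 0) = p ∧
      (∀ t ∈ Ioo (-ε) ε,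
        (x t, y t) ∈ Ω ∧
        (deriv x t) ^ 2 + (deriv y t) ^ 2 = 1 ∧
        f (x t, y t) = f p + t ∧
        Bfun f (x t, y t) = 0 ∧
        deriv x t = pd1 f (x t, y t) ∧
        deriv y t = pd2 f (x t, y t)) ∧
      (deriv (deriv x) 0, deriv (deriv y) 0) ≠ (0, 0) ∧
      (∀ t ∈ Ioo (-ε) ε,
        lprod (deriv (fun s => (f p + s, x s, y s)) t)
              (deriv (fun s => (f p + s, x s, y s)) t) = 0 ∧
        deriv (fun s => (f p + s, x s, y s)) t ≠ 0) ∧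
      ¬ ∃ c : ℝ, deriv (deriv (fun s => (f p + s, x s, y s))) 0
          = c • deriv (fun s => (f p + s, x s, y s)) 0 :=
  stmt2_general le_top hΩ hf hzmc hp hB hgrad
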